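/- Let α ≥ 1, p ∈ ℝ with p + α > 0, and let f : (0,∞) × 𝕊² → ℂ be smooth with ∫ R |f|² dσ dR < ∞ and ∫ R^{1-2p} |∂_R^α f|² dσ dR < ∞. Then lim inf_{R→0} ∫_{𝕊²} |R^α f(R,ω)|² dσ = 0, and consequently ∫_{𝕊²}|R^{-p} f(R,ω)|² dσ ≤ 2(p+α)^{-1} ∫_0^R ∫_{𝕊²} R'^{1-2p} |∂_R^α f|² dσ dR' for all R > 0; in particular ∫_{𝕊²}|R^{-p}f|² dσ → 0 as R → 0. -/

import Mathlib

open MeasureTheory Filter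

noncomputable section

abbrev E3 := EuclideanSpace ℝ (Fin 3)

/-- The α-twisted derivative: `∂_R^α f (R) = R^{-α} d/dR (R^α f)`. -/
def twistDeriv (α : ℝ) (f : ℝ → ℂ) (R : ℝ) : ℂ :=
  ((R ^ (-α) : ℝ) : ℂ) * deriv (fun r : ℝ => ((r ^ α : ℝ) : ℂ) * f r) R

def sphMap (v : Fin 2 → ℝ) : E3 :=
  !₂[Real.cos (v 0) * Real.cos (v 1), Real.cos (v 0) * Real.sin (v 1), Real.sin (v 0)]

lemma sphMap_contDiff : ContDiff ℝ 1 sphMap := by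
  rw [contDiff_euclidean]
  intro i
  fin_cases i <;> simp [sphMap] <;> fun_prop

lemma sphere_subset : Metric.sphere (0 : E3) 1 ⊆
    sphMap '' (Metric.closedBall (0 : Fin 2 → ℝ) 4) := by
  intro x hx
  have hx' : x 0 ^ 2 + x 1 ^ 2 + x 2 ^ 2 = 1 := by
    have h := EuclideanSpace.real_norm_sq_eq x
    rw [mem_sphere_zero_iff_norm.1 hx, Fin.sum_univ_three] at h
    linarith
  have hz1 : -1 ≤ x 2 := by nlinarith [sq_nonneg (x 0), sq_nonneg (x 1)]
  have hz2 : x 2 ≤ 1 := by nlinarith [sq_nonneg (x 0), sq_nonneg (x 1)]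
  set z : ℂ := ⟨x 0, x 1⟩ with hz
  have hn : ‖z‖ = Real.sqrt (1 - x 2 ^ 2) := by
    rw [Complex.norm_eq_sqrt_sq_add_sq]
    congr 1
    simp only [hz]
    linarith
  have hc := Complex.norm_mul_cos_arg z
  have hs := Complex.norm_mul_sin_arg z
  refine ⟨![Real.arcsin (x 2), Complex.arg z], ?_, ?_⟩
  · rw [mem_closedBall_zero_iff, pi_norm_le_iff_of_nonneg (by norm_num)]
    intro i
    have hpi := Real.pi_lt_four
    fin_cases i
    · simp only [Fin.zero_eta, Matrix.cons_val_zero, Real.norm_eq_abs, abs_le]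
      constructor <;> linarith [Real.neg_pi_div_two_le_arcsin (x 2), Real.arcsin_le_pi_div_two (x 2), Real.pi_pos]
    · simp only [Fin.mk_one, Matrix.cons_val_one, Matrix.cons_val_zero, Real.norm_eq_abs]
      linarith [Complex.abs_arg_le_pi z]
  · ext i
    fin_cases i
    · simp [sphMap, Real.cos_arcsin, ← hn, hc]
      simp [hz]
    · simp [sphMap, Real.cos_arcsin, ← hn, hs]
      simp [hz]
    · simp [sphMap, Real.sin_arcsin hz1 hz2]

lemma sphere_finite : μH[2] (Metric.sphere (0 : E3) 1) < ⊤ := by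
  obtain ⟨K, hK⟩ := (sphMap_contDiff.contDiffOn
    (s := Metric.closedBall (0 : Fin 2 → ℝ) 4)).exists_lipschitzOnWith one_ne_zero
    (convex_closedBall _ _) (isCompact_closedBall _ _)
  refine (measure_mono sphere_subset).trans_lt ?_
  refine (hK.hausdorffMeasure_image_le (by norm_num : (0 : ℝ) ≤ 2)).trans_lt ?_
  have h := hausdorffMeasure_pi_real (ι := Fin 2)
  simp only [Fintype.card_fin, Nat.cast_ofNat] at h
  rw [h]
  refine ENNReal.mul_lt_top (ENNReal.rpow_lt_top_of_nonneg (by norm_num) (by simp)) ?_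
  exact (isCompact_closedBall _ _).measure_lt_top

lemma cs_interval {a b : ℝ} (hab : a ≤ b) {u v : ℝ → ℝ} (hu : ContinuousOn u (Set.Icc a b))
    (hv : ContinuousOn v (Set.Icc a b)) :
    (∫ s in a..b, u s * v s) ^ 2 ≤ (∫ s in a..b, u s ^ 2) * ∫ s in a..b, v s ^ 2 := by
  have I : ∀ {w : ℝ → ℝ}, ContinuousOn w (Set.Icc a b) → IntervalIntegrable w volume a b :=
    fun h => h.intervalIntegrable_of_Icc hab
  have key := discrim_le_zero (a := ∫ s in a..b, u s ^ 2) (b := 2 * ∫ s in a..b, u s * v s)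
    (c := ∫ s in a..b, v s ^ 2) (fun t => by
      have h0 : 0 ≤ ∫ s in a..b, (t * t) * u s ^ 2 + (2 * t) * (u s * v s) + v s ^ 2 := by
        apply intervalIntegral.integral_nonneg hab
        intro s _
        nlinarith [sq_nonneg (t * u s + v s)]
      rw [intervalIntegral.integral_add (I (by fun_prop)) (I (by fun_prop)),
        intervalIntegral.integral_add (I (by fun_prop)) (I (by fun_prop)),
        intervalIntegral.integral_const_mul, intervalIntegral.integral_const_mul] at h0
      linarith)
  rw [discrim] at key
  linarith

section
variable {α : ℝ} {f : ℝ → E3 → ℂ}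

lemma g_contDiffOn (α : ℝ)
    (hf : ContDiffOn ℝ (⊤ : ℕ∞) (fun q : ℝ × E3 => f q.1 q.2) {q : ℝ × E3 | 0 < q.1}) :
    ContDiffOn ℝ 1 (fun q : ℝ × E3 => ((q.1 ^ α : ℝ) : ℂ) * f q.1 q.2)
      {q : ℝ × E3 | 0 < q.1} := by
  refine ContDiffOn.mul ?_ (hf.of_le (by exact_mod_cast le_top))
  refine Complex.ofRealCLM.contDiff.comp_contDiffOn ?_
  intro q hq
  exact (contDiffAt_fst.rpow_const_of_ne (ne_of_gt hq)).contDiffWithinAt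

lemma open_half : IsOpen {q : ℝ × E3 | 0 < q.1} := isOpen_lt continuous_const continuous_fst

lemma g_hasDerivAt (α : ℝ)
    (hf : ContDiffOn ℝ (⊤ : ℕ∞) (fun q : ℝ × E3 => f q.1 q.2) {q : ℝ × E3 | 0 < q.1})
    {s : ℝ} (hs : 0 < s) (x : E3) :
    HasDerivAt (fun r : ℝ => ((r ^ α : ℝ) : ℂ) * f r x)
      (fderiv ℝ (fun q : ℝ × E3 => ((q.1 ^ α : ℝ) : ℂ) * f q.1 q.2) (s, x) (1, 0)) s := by
  have h := ((g_contDiffOn α hf).contDiffAt (open_half.mem_nhds (x := (s, x)) hs)).differentiableAt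
    one_ne_zero
  have h2 : HasDerivAt (fun r : ℝ => (r, x)) ((1 : ℝ), (0 : E3)) s :=
    (hasDerivAt_id s).prodMk (hasDerivAt_const s x)
  exact h.hasFDerivAt.comp_hasDerivAt s h2

lemma D_contOn (α : ℝ)
    (hf : ContDiffOn ℝ (⊤ : ℕ∞) (fun q : ℝ × E3 => f q.1 q.2) {q : ℝ × E3 | 0 < q.1}) :
    ContinuousOn (fun q : ℝ × E3 => deriv (fun r : ℝ => ((r ^ α : ℝ) : ℂ) * f r q.2) q.1)
      {q : ℝ × E3 | 0 < q.1} := by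
  have h := (g_contDiffOn α hf).continuousOn_fderiv_of_isOpen open_half le_rfl
  refine (h.clm_apply (continuousOn_const (c := ((1 : ℝ), (0 : E3))))).congr ?_
  intro q hq
  exact (g_hasDerivAt α hf hq q.2).deriv

lemma T_contOn (α : ℝ)
    (hf : ContDiffOn ℝ (⊤ : ℕ∞) (fun q : ℝ × E3 => f q.1 q.2) {q : ℝ × E3 | 0 < q.1}) :
    ContinuousOn (fun q : ℝ × E3 => twistDeriv α (fun s => f s q.2) q.1)
      {q : ℝ × E3 | 0 < q.1} := by
  unfold twistDeriv
  refine ContinuousOn.mul ?_ (D_contOn α hf)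
  refine Complex.continuous_ofReal.comp_continuousOn ?_
  exact continuousOn_fst.rpow_const fun q hq => Or.inl (ne_of_gt hq)

lemma slice_contOn {β : Type*} [TopologicalSpace β] {F : ℝ × E3 → β}
    (hF : ContinuousOn F {q : ℝ × E3 | 0 < q.1}) (x : E3) {r R : ℝ} (hr : 0 < r) :
    ContinuousOn (fun s => F (s, x)) (Set.Icc r R) :=
  hF.comp (by fun_prop) fun s hs => lt_of_lt_of_le hr hs.1

lemma pointwise (α p : ℝ) (hpα : 0 < p + α)
    (hf : ContDiffOn ℝ (⊤ : ℕ∞) (fun q : ℝ × E3 => f q.1 q.2) {q : ℝ × E3 | 0 < q.1})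
    {r R : ℝ} (hr : 0 < r) (hrR : r ≤ R) (x : E3) :
    (R ^ α) ^ 2 * ‖f R x‖ ^ 2 ≤
      (R ^ (2 * (p + α)) / (p + α)) *
        (∫ s in r..R, s ^ (1 - 2 * p) * ‖twistDeriv α (fun t => f t x) s‖ ^ 2) +
      2 * ((r ^ α) ^ 2 * ‖f r x‖ ^ 2) := by
  have hR : 0 < R := hr.trans_le hrR
  have hT := slice_contOn (T_contOn α hf) x (R := R) hr
  have hD := slice_contOn (D_contOn α hf) x (R := R) hr
  simp only at hT hD
  have hpow : ∀ c : ℝ, ContinuousOn (fun s : ℝ => s ^ c) (Set.Icc r R) := fun c s hs =>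
    (Real.continuousAt_rpow_const s c (Or.inl (hr.trans_le hs.1).ne')).continuousWithinAt
  have hftc := intervalIntegral.integral_eq_sub_of_hasDerivAt (a := r) (b := R)
    (f := fun r : ℝ => ((r ^ α : ℝ) : ℂ) * f r x)
    (f' := deriv (fun r : ℝ => ((r ^ α : ℝ) : ℂ) * f r x))
    (fun s hs => by
      rw [Set.uIcc_of_le hrR] at hs
      exact (g_hasDerivAt α hf (hr.trans_le hs.1) x).differentiableAt.hasDerivAt)
    (hD.intervalIntegrable_of_Icc hrR)
  have hcs := cs_interval hrR (u := fun s => s ^ (p + α - 1 / 2))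
    (v := fun s => s ^ (1 / 2 - p) * ‖twistDeriv α (fun t => f t x) s‖) (hpow _)
    ((hpow _).mul hT.norm)
  have e1 : ∫ s in r..R, s ^ (p + α - 1 / 2) *
      (s ^ (1 / 2 - p) * ‖twistDeriv α (fun t => f t x) s‖) =
      ∫ s in r..R, ‖deriv (fun r : ℝ => ((r ^ α : ℝ) : ℂ) * f r x) s‖ := by
    apply intervalIntegral.integral_congr
    intro s hs
    rw [Set.uIcc_of_le hrR] at hs
    have hs0 : 0 < s := hr.trans_le hs.1
    simp only [twistDeriv, norm_mul, Complex.norm_real, Real.norm_eq_abs]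
    rw [abs_of_pos (Real.rpow_pos_of_pos hs0 _), ← mul_assoc, ← mul_assoc, ← Real.rpow_add hs0,
      ← Real.rpow_add hs0]
    ring_nf
    simp
  have e2 : ∫ s in r..R, (s ^ (p + α - 1 / 2)) ^ 2 = ∫ s in r..R, s ^ (2 * (p + α) - 1) := by
    apply intervalIntegral.integral_congr
    intro s hs
    rw [Set.uIcc_of_le hrR] at hs
    have hs0 : 0 < s := hr.trans_le hs.1
    simp only
    rw [← Real.rpow_mul_natCast hs0.le]
    congr 1
    push_cast
    ring
  have e3 : ∫ s in r..R, (s ^ (1 / 2 - p) * ‖twistDeriv α (fun t => f t x) s‖) ^ 2 =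
      ∫ s in r..R, s ^ (1 - 2 * p) * ‖twistDeriv α (fun t => f t x) s‖ ^ 2 := by
    apply intervalIntegral.integral_congr
    intro s hs
    rw [Set.uIcc_of_le hrR] at hs
    have hs0 : 0 < s := hr.trans_le hs.1
    simp only
    rw [mul_pow, ← Real.rpow_mul_natCast hs0.le]
    congr 2
    push_cast
    ring
  rw [e1, e2, e3] at hcs
  have e4 : ∫ s in r..R, s ^ (2 * (p + α) - 1) ≤ R ^ (2 * (p + α)) / (2 * (p + α)) := by
    rw [integral_rpow (Or.inl (by linarith))]
    rw [sub_add_cancel]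
    gcongr
    linarith [Real.rpow_nonneg hr.le (2 * (p + α))]
  set J := ∫ s in r..R, s ^ (1 - 2 * p) * ‖twistDeriv α (fun t => f t x) s‖ ^ 2 with hJ
  have hJ0 : 0 ≤ J := intervalIntegral.integral_nonneg hrR fun s hs =>
    mul_nonneg (Real.rpow_nonneg (hr.le.trans hs.1) _) (sq_nonneg _)
  have hdiff : ‖((R ^ α : ℝ) : ℂ) * f R x - ((r ^ α : ℝ) : ℂ) * f r x‖ ^ 2 ≤
      R ^ (2 * (p + α)) / (2 * (p + α)) * J := by
    rw [← hftc]
    calc _ ≤ (∫ s in r..R, ‖deriv (fun r : ℝ => ((r ^ α : ℝ) : ℂ) * f r x) s‖) ^ 2 := by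
          gcongr
          exact intervalIntegral.norm_integral_le_integral_norm hrR
      _ ≤ _ := hcs
      _ ≤ _ := by gcongr
  have nR : ‖((R ^ α : ℝ) : ℂ) * f R x‖ = R ^ α * ‖f R x‖ := by
    rw [norm_mul, Complex.norm_real, Real.norm_of_nonneg (Real.rpow_nonneg hR.le _)]
  have nr : ‖((r ^ α : ℝ) : ℂ) * f r x‖ = r ^ α * ‖f r x‖ := by
    rw [norm_mul, Complex.norm_real, Real.norm_of_nonneg (Real.rpow_nonneg hr.le _)]
  rw [← mul_pow, ← mul_pow, ← nR, ← nr]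
  have tri := norm_le_norm_sub_add (((R ^ α : ℝ) : ℂ) * f R x) (((r ^ α : ℝ) : ℂ) * f r x)
  have e5 : R ^ (2 * (p + α)) / (p + α) * J = 2 * (R ^ (2 * (p + α)) / (2 * (p + α)) * J) := by
    field_simp
  rw [e5]
  generalize ((R ^ α : ℝ) : ℂ) * f R x = A at *
  generalize ((r ^ α : ℝ) : ℂ) * f r x = B at *
  have : ‖A‖ ^ 2 ≤ (‖A - B‖ + ‖B‖) ^ 2 := by gcongr
  nlinarith [sq_nonneg (‖A - B‖ - ‖B‖)]

lemma sph_integrable {F : E3 → ℝ} (hF : Continuous F) :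
    Integrable F ((μH[2] : Measure E3).restrict (Metric.sphere (0 : E3) 1)) := by
  haveI : IsFiniteMeasure ((μH[2] : Measure E3).restrict (Metric.sphere (0 : E3) 1)) :=
    ⟨by simpa using sphere_finite⟩
  have := hF.continuousOn.integrableOn_compact (isCompact_sphere (0 : E3) 1)
    (μ := (μH[2] : Measure E3).restrict (Metric.sphere (0 : E3) 1))
  rwa [IntegrableOn, Measure.restrict_restrict Metric.isClosed_sphere.measurableSet,
    Set.inter_self] at this

lemma slice_cont {β : Type*} [TopologicalSpace β] {F : ℝ × E3 → β}
    (hF : ContinuousOn F {q : ℝ × E3 | 0 < q.1}) {s : ℝ} (hs : 0 < s) :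
    Continuous (fun x => F (s, x)) :=
  hF.comp_continuous (by fun_prop) fun _ => hs

lemma prod_int {F : ℝ × E3 → ℝ} (hF : ContinuousOn F {q : ℝ × E3 | 0 < q.1})
    {r R : ℝ} (hr : 0 < r) :
    haveI : IsFiniteMeasure ((μH[2] : Measure E3).restrict (Metric.sphere (0 : E3) 1)) :=
      ⟨by simpa using sphere_finite⟩
    Integrable F ((volume.restrict (Set.Icc r R)).prod
      ((μH[2] : Measure E3).restrict (Metric.sphere (0 : E3) 1))) := by
  haveI : IsFiniteMeasure ((μH[2] : Measure E3).restrict (Metric.sphere (0 : E3) 1)) :=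
    ⟨by simpa using sphere_finite⟩
  set ν := (μH[2] : Measure E3).restrict (Metric.sphere (0 : E3) 1) with hν
  have e : ν = ν.restrict (Metric.sphere (0 : E3) 1) := by
    rw [hν, Measure.restrict_restrict Metric.isClosed_sphere.measurableSet, Set.inter_self]
  rw [e, Measure.prod_restrict]
  refine ContinuousOn.integrableOn_compact (isCompact_Icc.prod (isCompact_sphere _ _)) ?_
  exact hF.mono fun q hq => lt_of_lt_of_le hr hq.1.1

lemma integrated (α p : ℝ) (hpα : 0 < p + α)
    (hf : ContDiffOn ℝ (⊤ : ℕ∞) (fun q : ℝ × E3 => f q.1 q.2) {q : ℝ × E3 | 0 < q.1})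
    {r R : ℝ} (hr : 0 < r) (hrR : r ≤ R) :
    (R ^ α) ^ 2 * (∫ x in Metric.sphere (0 : E3) 1, ‖f R x‖ ^ 2 ∂(μH[2])) ≤
      (R ^ (2 * (p + α)) / (p + α)) *
        (∫ s in Set.Icc r R, s ^ (1 - 2 * p) *
          ∫ x in Metric.sphere (0 : E3) 1, ‖twistDeriv α (fun t => f t x) s‖ ^ 2 ∂(μH[2])) +
      2 * ((r ^ α) ^ 2 * ∫ x in Metric.sphere (0 : E3) 1, ‖f r x‖ ^ 2 ∂(μH[2])) := by
  haveI : IsFiniteMeasure ((μH[2] : Measure E3).restrict (Metric.sphere (0 : E3) 1)) :=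
    ⟨by simpa using sphere_finite⟩
  have hR : 0 < R := hr.trans_le hrR
  have hF : ContinuousOn (fun q : ℝ × E3 => q.1 ^ (1 - 2 * p) *
      ‖twistDeriv α (fun t => f t q.2) q.1‖ ^ 2) {q : ℝ × E3 | 0 < q.1} :=
    (continuousOn_fst.rpow_const fun q hq => Or.inl (ne_of_gt hq)).mul ((T_contOn α hf).norm.pow 2)
  have hI := prod_int hF (R := R) hr
  have hsw := integral_integral_swap
    (f := fun (s : ℝ) (x : E3) => s ^ (1 - 2 * p) * ‖twistDeriv α (fun t => f t x) s‖ ^ 2) hI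
  simp only [integral_const_mul] at hsw
  rw [hsw]
  rw [← integral_const_mul, ← integral_const_mul, ← integral_const_mul, ← integral_const_mul,
    ← integral_add]
  · refine integral_mono ?_ ?_ ?_
    · exact (sph_integrable ((slice_cont hf.continuousOn hR).norm.pow 2)).const_mul _
    · exact (hI.integral_prod_right.const_mul _).add
        (((sph_integrable ((slice_cont hf.continuousOn hr).norm.pow 2)).const_mul _).const_mul _)
    · intro x
      have := pointwise α p hpα hf hr hrR x
      rw [intervalIntegral.integral_of_le hrR, ← integral_Icc_eq_integral_Ioc] at this
      exact this
  · exact hI.integral_prod_right.const_mul _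
  · exact ((sph_integrable ((slice_cont hf.continuousOn hr).norm.pow 2)).const_mul _).const_mul _

end

/-- Let `α ≥ 1`, `p + α > 0`, and `f` smooth on `(0,∞) × 𝕊²` with finite weighted
energies. Then the spherical `L²` norm of `R^α f` has liminf `0` at `R = 0`, and
`∫_{𝕊²}|R^{-p}f|² dσ ≤ 2(p+α)⁻¹ ∫₀^R ∫_{𝕊²} R'^{1-2p}|∂_R^α f|² dσ dR'`;
in particular `∫_{𝕊²}|R^{-p}f|² dσ → 0` as `R → 0`. -/
theorem vanishing_at_origin (α p : ℝ) (hα : 1 ≤ α) (hpα : 0 < p + α)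
    (f : ℝ → E3 → ℂ)
    (hf : ContDiffOn ℝ (⊤ : ℕ∞) (fun q : ℝ × E3 => f q.1 q.2) {q : ℝ × E3 | 0 < q.1})
    (h1 : IntegrableOn
      (fun R => R * ∫ x in Metric.sphere (0 : E3) 1, ‖f R x‖ ^ 2 ∂(μH[2]))
      (Set.Ioi 0))
    (h2 : IntegrableOn
      (fun R => R ^ (1 - 2 * p) *
        ∫ x in Metric.sphere (0 : E3) 1, ‖twistDeriv α (fun s => f s x) R‖ ^ 2 ∂(μH[2]))
      (Set.Ioi 0)) :
    (∀ ε > (0 : ℝ), ∀ δ > (0 : ℝ), ∃ R : ℝ, 0 < R ∧ R < δ ∧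
      ((R ^ α : ℝ)) ^ 2 * ∫ x in Metric.sphere (0 : E3) 1, ‖f R x‖ ^ 2 ∂(μH[2]) < ε) ∧
    (∀ R : ℝ, 0 < R →
      ((R ^ (-p) : ℝ)) ^ 2 * (∫ x in Metric.sphere (0 : E3) 1, ‖f R x‖ ^ 2 ∂(μH[2])) ≤
        2 * (p + α)⁻¹ *
          ∫ R' in Set.Ioo (0 : ℝ) R,
            R' ^ (1 - 2 * p) *
              ∫ x in Metric.sphere (0 : E3) 1,
                ‖twistDeriv α (fun s => f s x) R'‖ ^ 2 ∂(μH[2])) ∧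
    Tendsto
      (fun R : ℝ =>
        ((R ^ (-p) : ℝ)) ^ 2 * ∫ x in Metric.sphere (0 : E3) 1, ‖f R x‖ ^ 2 ∂(μH[2]))
      (nhdsWithin 0 (Set.Ioi 0)) (nhds 0) := by
  have hG0 : ∀ R, 0 ≤ ∫ x in Metric.sphere (0 : E3) 1, ‖f R x‖ ^ 2 ∂(μH[2]) :=
    fun R => integral_nonneg fun x => sq_nonneg _
  have hK0 : ∀ R, 0 < R → 0 ≤ R ^ (1 - 2 * p) *
        ∫ x in Metric.sphere (0 : E3) 1, ‖twistDeriv α (fun s => f s x) R‖ ^ 2 ∂(μH[2]) :=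
    fun R hR => mul_nonneg (Real.rpow_nonneg hR.le _) (integral_nonneg fun x => sq_nonneg _)
  have P1 : ∀ ε > (0 : ℝ), ∀ δ > (0 : ℝ), ∃ R : ℝ, 0 < R ∧ R < δ ∧
      ((R ^ α : ℝ)) ^ 2 * ∫ x in Metric.sphere (0 : E3) 1, ‖f R x‖ ^ 2 ∂(μH[2]) < ε := by
    intro ε hε δ hδ
    by_contra! hcon
    have hint : IntegrableOn (fun R : ℝ => ε * R ^ (1 - 2 * α)) (Set.Ioo 0 δ) := by
      refine Integrable.mono' (h1.mono_set Set.Ioo_subset_Ioi_self) ?_ ?_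
      · exact (Measurable.const_mul (by fun_prop) _).aestronglyMeasurable
      · refine ae_restrict_of_forall_mem measurableSet_Ioo fun R hR => ?_
        have h := hcon R hR.1 hR.2
        have hpos := Real.rpow_pos_of_pos hR.1 (1 - 2 * α)
        rw [Real.norm_of_nonneg (by positivity)]
        have e : R ^ (1 - 2 * α) * (R ^ α) ^ 2 = R := by
          rw [← Real.rpow_mul_natCast hR.1.le, ← Real.rpow_add hR.1]
          push_cast
          ring_nf
          simp
        calc ε * R ^ (1 - 2 * α) = R ^ (1 - 2 * α) * ε := mul_comm _ _
          _ ≤ R ^ (1 - 2 * α) * ((R ^ α) ^ 2 *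
              ∫ x in Metric.sphere (0 : E3) 1, ‖f R x‖ ^ 2 ∂(μH[2])) := by gcongr
          _ = _ := by rw [← mul_assoc, e]
    have h3 : IntegrableOn (fun R : ℝ => R ^ (1 - 2 * α)) (Set.Ioo 0 δ) := by
      have := hint.const_mul ε⁻¹
      refine this.congr (Eventually.of_forall fun R => ?_)
      simp only
      field_simp
    rw [intervalIntegral.integrableOn_Ioo_rpow_iff hδ] at h3
    linarith
  have P2 : ∀ R : ℝ, 0 < R →
      ((R ^ (-p) : ℝ)) ^ 2 * (∫ x in Metric.sphere (0 : E3) 1, ‖f R x‖ ^ 2 ∂(μH[2])) ≤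
        2 * (p + α)⁻¹ *
          ∫ R' in Set.Ioo (0 : ℝ) R,
            R' ^ (1 - 2 * p) *
              ∫ x in Metric.sphere (0 : E3) 1,
                ‖twistDeriv α (fun s => f s x) R'‖ ^ 2 ∂(μH[2]) := by
    intro R hR
    set I := ∫ R' in Set.Ioo (0 : ℝ) R, R' ^ (1 - 2 * p) *
              ∫ x in Metric.sphere (0 : E3) 1,
                ‖twistDeriv α (fun s => f s x) R'‖ ^ 2 ∂(μH[2]) with hI
    have hI0 : 0 ≤ I := setIntegral_nonneg measurableSet_Ioo fun s hs => hK0 s hs.1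
    have main : (R ^ α) ^ 2 * (∫ x in Metric.sphere (0 : E3) 1, ‖f R x‖ ^ 2 ∂(μH[2])) ≤
        (R ^ (2 * (p + α)) / (p + α)) * I := by
      refine le_of_forall_pos_le_add fun ε hε => ?_
      obtain ⟨r, hr, hrR, hlt⟩ := P1 (ε / 2) (by positivity) R hR
      have h := integrated α p hpα hf hr hrR.le
      have hle : (∫ s in Set.Icc r R, s ^ (1 - 2 * p) *
          ∫ x in Metric.sphere (0 : E3) 1, ‖twistDeriv α (fun t => f t x) s‖ ^ 2 ∂(μH[2])) ≤ I := by
        rw [hI, integral_Icc_eq_integral_Ioo]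
        refine setIntegral_mono_set (h2.mono_set Set.Ioo_subset_Ioi_self) ?_ ?_
        · exact ae_restrict_of_forall_mem measurableSet_Ioo fun s hs => hK0 s hs.1
        · exact (Set.Ioo_subset_Ioo_left hr.le).eventuallyLE
      have : (R ^ (2 * (p + α)) / (p + α)) * (∫ s in Set.Icc r R, s ^ (1 - 2 * p) *
          ∫ x in Metric.sphere (0 : E3) 1, ‖twistDeriv α (fun t => f t x) s‖ ^ 2 ∂(μH[2])) ≤
          (R ^ (2 * (p + α)) / (p + α)) * I := by gcongr
      linarith
    have e1 : (R ^ (-p)) ^ 2 = R ^ (-(2 * (p + α))) * (R ^ α) ^ 2 := by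
      rw [← Real.rpow_mul_natCast hR.le, ← Real.rpow_mul_natCast hR.le, ← Real.rpow_add hR]
      congr 1
      push_cast
      ring
    have e2 : R ^ (-(2 * (p + α))) * R ^ (2 * (p + α)) = 1 := by
      rw [← Real.rpow_add hR]
      simp
    rw [e1, mul_assoc]
    calc _ ≤ R ^ (-(2 * (p + α))) * ((R ^ (2 * (p + α)) / (p + α)) * I) := by gcongr
      _ = (R ^ (-(2 * (p + α))) * R ^ (2 * (p + α))) * ((p + α)⁻¹ * I) := by ring
      _ = (p + α)⁻¹ * I := by rw [e2, one_mul]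
      _ ≤ _ := by
        have : 0 ≤ (p + α)⁻¹ * I := by positivity
        linarith
  refine ⟨P1, P2, ?_⟩
  have hlim : Tendsto (fun R : ℝ => 2 * (p + α)⁻¹ *
          ∫ R' in Set.Ioo (0 : ℝ) R,
            R' ^ (1 - 2 * p) *
              ∫ x in Metric.sphere (0 : E3) 1,
                ‖twistDeriv α (fun s => f s x) R'‖ ^ 2 ∂(μH[2]))
      (nhdsWithin 0 (Set.Ioi 0)) (nhds 0) := by
    have hv : Tendsto ((volume.restrict (Set.Ioi (0 : ℝ))) ∘ fun R : ℝ => Set.Ioo (0 : ℝ) R)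
        (nhdsWithin 0 (Set.Ioi 0)) (nhds 0) := by
      have e : ((volume.restrict (Set.Ioi (0 : ℝ))) ∘ fun R : ℝ => Set.Ioo (0 : ℝ) R) =
          fun R => ENNReal.ofReal R := by
        funext R
        simp only [Function.comp]
        rw [Measure.restrict_eq_self _ Set.Ioo_subset_Ioi_self, Real.volume_Ioo, sub_zero]
      rw [e]
      have := (ENNReal.continuous_ofReal.tendsto 0).mono_left
        (nhdsWithin_le_nhds (s := Set.Ioi (0 : ℝ)))
      simpa using this
    have h := (Integrable.tendsto_setIntegral_nhds_zero h2 hv).const_mul (2 * (p + α)⁻¹)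
    rw [mul_zero] at h
    refine h.congr fun R => ?_
    rw [Measure.restrict_restrict measurableSet_Ioo,
      Set.inter_eq_left.2 Set.Ioo_subset_Ioi_self]
  refine squeeze_zero' ?_ ?_ hlim
  · exact Eventually.of_forall fun R => mul_nonneg (sq_nonneg _) (hG0 R)
  · filter_upwards [self_mem_nhdsWithin] with R hR using P2 R hR

end
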